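/- arXiv:2107.04276 — 9 statements merged into one kernel-verified Lean document; each statement's English description precedes it below -/
import Mathlib

section
/- Let L = E W Eᵀ be the weighted Laplacian of a connected undirected graph G with positive edge weights, let (u,v) ∈ E be an edge, b = e_u − e_v, and let R_uv(G) = bᵀ L† b be the effective resistance between u and v. Then for every δ ∈ ℝ with |δ| ≤ 1/R_uv(G), the perturbed Laplacian L + δ b bᵀ is positive semidefinite; consequently the perturbed consensus protocol ẋ = −(L + δ b bᵀ)x is stable. -/
open Matrix BigOperators

/-- For the weighted Laplacian `L = E W Eᵀ` of a connected graph with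
positive edge weights and an edge `(u,v)` with effective resistance `R = bᵀ L† b`
(encoded via a solution `y` of `L y = b`, `R = b ⬝ᵥ y`), any single-edge perturbation
`δ` with `|δ| ≤ 1/R` keeps `L + δ b bᵀ` positive semidefinite. -/
theorem secure_consensus_single_edge_robustness
    {n m : ℕ} (Em : Matrix (Fin n) (Fin m) ℝ) (w : Fin m → ℝ)
    (hw : ∀ k, 0 < w k)
    (hinc : ∀ k : Fin m, ∃ i j : Fin n, i ≠ j ∧
      ∀ l, Em l k = (if l = i then (1 : ℝ) else 0) - (if l = j then 1 else 0))
    (L : Matrix (Fin n) (Fin n) ℝ)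
    (hL : L = Em * Matrix.diagonal w * Em.transpose)
    -- connectivity: the kernel of `L` is exactly the span of the all-ones vector
    (hker : ∀ x : Fin n → ℝ, L.mulVec x = 0 ↔ ∃ c : ℝ, x = fun _ => c)
    (u v : Fin n) (huv : u ≠ v)
    (b : Fin n → ℝ)
    (hb : b = fun i => (if i = u then (1 : ℝ) else 0) - (if i = v then 1 else 0))
    -- `(u,v)` is an edge of the graph
    (hedge : ∃ k : Fin m, (∀ l, Em l k = b l) ∨ (∀ l, Em l k = -(b l)))
    -- effective resistance between `u` and `v`
    (y : Fin n → ℝ) (hy : L.mulVec y = b)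
    (R : ℝ) (hR : R = b ⬝ᵥ y)
    (δ : ℝ) (hδ : |δ| ≤ 1 / R) :
    (L + δ • Matrix.vecMulVec b b).PosSemidef := by
  have hLps : L.PosSemidef := by
    have h := (Matrix.PosSemidef.diagonal (fun k => (hw k).le : (0 : Fin m → ℝ) ≤ w)).mul_mul_conjTranspose_same Em
    rw [Matrix.conjTranspose_eq_transpose_of_trivial] at h
    rw [hL]; exact h
  have hLt : Lᵀ = L := by
    have := hLps.isHermitian.eq
    rwa [Matrix.conjTranspose_eq_transpose_of_trivial] at this
  have hq : ∀ x : Fin n → ℝ, 0 ≤ x ⬝ᵥ (L *ᵥ x) := fun x => by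
    simpa using hLps.dotProduct_mulVec_nonneg x
  have hyx : ∀ x : Fin n → ℝ, y ⬝ᵥ (L *ᵥ x) = b ⬝ᵥ x := fun x => by
    rw [Matrix.dotProduct_mulVec, ← Matrix.mulVec_transpose, hLt, hy]
  have hR0 : 0 ≤ R := by
    have := hq y
    rw [hyx] at this
    rwa [hR]
  refine Matrix.PosSemidef.of_dotProduct_mulVec_nonneg ?_ ?_
  · change _ᴴ = _
    rw [Matrix.conjTranspose_eq_transpose_of_trivial, Matrix.transpose_add, hLt,
      Matrix.transpose_smul, Matrix.transpose_vecMulVec]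
  · intro x
    have e : star x ⬝ᵥ ((L + δ • Matrix.vecMulVec b b) *ᵥ x)
        = x ⬝ᵥ (L *ᵥ x) + δ * (b ⬝ᵥ x) ^ 2 := by
      rw [Matrix.add_mulVec, Matrix.smul_mulVec, Matrix.vecMulVec_mulVec]
      simp [dotProduct_add, dotProduct_smul, dotProduct_comm x b]
      exact Or.inl (by ring)
    rw [e]
    rcases hR0.eq_or_lt with h0 | hpos
    · have : δ = 0 := by
        rw [← h0] at hδ
        simpa using hδ
      rw [this]
      simpa using hq x
    · have h1 := hq (x + (-(b ⬝ᵥ x) / R) • y)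
      have e2 : (x + (-(b ⬝ᵥ x) / R) • y) ⬝ᵥ (L *ᵥ (x + (-(b ⬝ᵥ x) / R) • y))
          = x ⬝ᵥ (L *ᵥ x) - (1 / R) * (b ⬝ᵥ x) ^ 2 := by
        simp only [Matrix.mulVec_add, Matrix.mulVec_smul, hy, add_dotProduct, dotProduct_add,
          smul_dotProduct, dotProduct_smul, hyx, smul_eq_mul, dotProduct_comm x b,
          dotProduct_comm y b, ← hR]
        field_simp
        ring
      rw [e2] at h1
      have h2 : -(1 / R) ≤ δ := (abs_le.mp hδ).1
      nlinarith [mul_nonneg (by linarith : 0 ≤ δ + 1 / R) (sq_nonneg (b ⬝ᵥ x))]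
end

section
/- Let L = E W Eᵀ be the weighted Laplacian of a connected undirected graph G with positive edge weights, let u ≠ v be vertices, b = e_u − e_v, and R_uv(G) = bᵀ L† b the effective resistance between u and v. If δ < −1/R_uv(G), then L + δ b bᵀ is not positive semidefinite: there exists x ∈ ℝⁿ with xᵀ(L + δ b bᵀ)x < 0 (indeed x = L† b is such a vector). Hence the robustness bound |δ| ≤ 1/R_uv(G) for single-edge perturbations is sharp. -/
open Matrix BigOperators

/-- Sharpness of the single-edge robustness bound: if `δ < -1/R_uv(G)`,
then `L + δ b bᵀ` is no longer positive semidefinite; indeed the solution `y` of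
`L y = b` (i.e. `y = L† b`) is a witness with `yᵀ (L + δ b bᵀ) y < 0`. -/
theorem secure_consensus_single_edge_bound_sharp
    {n m : ℕ} (Em : Matrix (Fin n) (Fin m) ℝ) (w : Fin m → ℝ)
    (hw : ∀ k, 0 < w k)
    (hinc : ∀ k : Fin m, ∃ i j : Fin n, i ≠ j ∧
      ∀ l, Em l k = (if l = i then (1 : ℝ) else 0) - (if l = j then 1 else 0))
    (L : Matrix (Fin n) (Fin n) ℝ)
    (hL : L = Em * Matrix.diagonal w * Em.transpose)
    -- connectivity: the kernel of `L` is exactly the span of the all-ones vector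
    (hker : ∀ x : Fin n → ℝ, L.mulVec x = 0 ↔ ∃ c : ℝ, x = fun _ => c)
    (u v : Fin n) (huv : u ≠ v)
    (b : Fin n → ℝ)
    (hb : b = fun i => (if i = u then (1 : ℝ) else 0) - (if i = v then 1 else 0))
    -- effective resistance between `u` and `v`
    (y : Fin n → ℝ) (hy : L.mulVec y = b)
    (R : ℝ) (hR : R = b ⬝ᵥ y)
    (δ : ℝ) (hδ : δ < -(1 / R)) :
    (y ⬝ᵥ (L + δ • Matrix.vecMulVec b b).mulVec y < 0) ∧
      ¬ (L + δ • Matrix.vecMulVec b b).PosSemidef := by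
  have hq : R = ∑ k, w k * (Em.transpose.mulVec y k) ^ 2 := by
    have h1 : R = y ⬝ᵥ L.mulVec y := by rw [hy, hR, dotProduct_comm]
    rw [h1, hL, ← Matrix.mulVec_mulVec, ← Matrix.mulVec_mulVec, Matrix.dotProduct_mulVec,
      ← Matrix.mulVec_transpose]
    simp only [dotProduct, Matrix.mulVec_diagonal]
    exact Finset.sum_congr rfl fun k _ => by ring
  have hnn : ∀ k ∈ Finset.univ, 0 ≤ w k * (Em.transpose.mulVec y k) ^ 2 :=
    fun k _ => mul_nonneg (hw k).le (sq_nonneg _)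
  have hRpos : 0 < R := by
    have h0 : 0 ≤ R := by rw [hq]; exact Finset.sum_nonneg hnn
    refine lt_of_le_of_ne h0 fun hz => ?_
    have h2 := (Finset.sum_eq_zero_iff_of_nonneg hnn).1 (hq.symm.trans hz.symm)
    have h3 : Em.transpose.mulVec y = 0 := by
      funext k
      have h4 := h2 k (Finset.mem_univ k)
      rcases mul_eq_zero.1 h4 with h | h
      · exact absurd h (hw k).ne'
      · exact pow_eq_zero_iff (two_ne_zero) |>.1 h
    have h5 : b = 0 := by
      rw [← hy, hL, ← Matrix.mulVec_mulVec, h3, Matrix.mulVec_zero]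
    have h6 := congrFun h5 u
    rw [hb] at h6
    simp [huv] at h6
  have hval : y ⬝ᵥ (L + δ • Matrix.vecMulVec b b).mulVec y = R + δ * (R * R) := by
    have hyb : y ⬝ᵥ b = R := by rw [hR, dotProduct_comm]
    have h7 : (Matrix.vecMulVec b b).mulVec y = R • b := by
      rw [hR]
      funext i
      simp only [Matrix.mulVec, dotProduct, Matrix.vecMulVec_apply, Pi.smul_apply, smul_eq_mul,
        Finset.sum_mul]
      exact Finset.sum_congr rfl fun k _ => by ring
    rw [Matrix.add_mulVec, Matrix.smul_mulVec, hy, h7, dotProduct_add, dotProduct_smul,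
      dotProduct_smul, hyb]
    simp
  have hneg : y ⬝ᵥ (L + δ • Matrix.vecMulVec b b).mulVec y < 0 := by
    rw [hval]
    have h8 : δ * R < -1 := by
      have := mul_lt_mul_of_pos_right hδ hRpos
      have h9 : -(1 / R) * R = -1 := by field_simp
      linarith
    nlinarith
  refine ⟨hneg, fun hp => ?_⟩
  have := hp.dotProduct_mulVec_nonneg y
  simp only [star_trivial] at this
  linarith
end

section
/- Let L = E W Eᵀ be the weighted Laplacian of a connected undirected graph G whose nominal edge weights are w_ij = p_ij(θ_ij) > 0 for decoding functions p_ij : ℝ → ℝ that are concave, differentiable, and Lipschitz with |p_ij′(η)| ≤ K_ij for all η, with K_uv > 0 for a fixed edge (u,v) ∈ E. Consider the single-edge attack that replaces the weight of (u,v) by p_uv(θ_uv + δ) while leaving all other weights unchanged, i.e. the perturbed Laplacian L_Δ = L + (p_uv(θ_uv + δ) − p_uv(θ_uv)) b bᵀ with b = e_u − e_v. If |δ| ≤ (K_uv · R_uv(G))⁻¹, where R_uv(G) is the effective resistance between u and v in the nominal graph, then L_Δ is positive semidefinite, so the perturbed consensus protocol ẋ = −L_Δ x is stable; this holds independently of the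 value of the codeword θ_uv ∈ ℝ. -/
open Matrix BigOperators

/-- **Theorem 1 of the paper.** For a connected weighted graph with
nominal weights `w_ij = p_ij(θ_ij) > 0` given by concave, differentiable, `K`-Lipschitz
decoding functions, a single-edge codeword attack `δ` on edge `(u,v)` with
`|δ| ≤ (K_uv · R_uv(G))⁻¹` leaves the perturbed Laplacian
`L + (p_uv(θ_uv+δ) - p_uv(θ_uv)) b bᵀ` positive semidefinite, independently of the
codeword `θ_uv`. -/
theorem sbdc_codeword_single_edge_robustness
    {n m : ℕ} (Em : Matrix (Fin n) (Fin m) ℝ) (w : Fin m → ℝ)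
    (hw : ∀ k, 0 < w k)
    (hinc : ∀ k : Fin m, ∃ i j : Fin n, i ≠ j ∧
      ∀ l, Em l k = (if l = i then (1 : ℝ) else 0) - (if l = j then 1 else 0))
    (L : Matrix (Fin n) (Fin n) ℝ)
    (hL : L = Em * Matrix.diagonal w * Em.transpose)
    -- connectivity: the kernel of `L` is exactly the span of the all-ones vector
    (hker : ∀ x : Fin n → ℝ, L.mulVec x = 0 ↔ ∃ c : ℝ, x = fun _ => c)
    (u v : Fin n) (huv : u ≠ v)
    (b : Fin n → ℝ)
    (hb : b = fun i => (if i = u then (1 : ℝ) else 0) - (if i = v then 1 else 0))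
    -- decoding function of the edge `(u,v)`: concave, differentiable, Lipschitz
    (p : ℝ → ℝ) (K : ℝ) (hK : 0 < K)
    (hp_diff : Differentiable ℝ p)
    (hp_conc : ConcaveOn ℝ Set.univ p)
    (hp_lip : ∀ η : ℝ, |deriv p η| ≤ K)
    -- `(u,v)` is an edge of the graph, with nominal weight `w_uv = p (θ_uv)`
    (θ : ℝ)
    (hedge : ∃ k : Fin m, ((∀ l, Em l k = b l) ∨ (∀ l, Em l k = -(b l))) ∧ w k = p θ)
    -- effective resistance between `u` and `v` in the nominal graph
    (y : Fin n → ℝ) (hy : L.mulVec y = b)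
    (R : ℝ) (hR : R = b ⬝ᵥ y)
    (δ : ℝ) (hδ : |δ| ≤ (K * R)⁻¹) :
    (L + (p (θ + δ) - p θ) • Matrix.vecMulVec b b).PosSemidef := by
  have hLpsd : L.PosSemidef := by
    have h1 : (Matrix.diagonal w).PosSemidef :=
      Matrix.PosSemidef.diagonal (fun k => (hw k).le)
    have h2 := h1.mul_mul_conjTranspose_same Em
    rw [Matrix.conjTranspose_eq_transpose_of_trivial] at h2
    rw [hL]
    exact h2
  have hpos : ∀ x : Fin n → ℝ, 0 ≤ x ⬝ᵥ (L *ᵥ x) := fun x => by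
    simpa using hLpsd.dotProduct_mulVec_nonneg x
  have hsymm : Lᵀ = L := by
    have := hLpsd.isHermitian.eq
    rwa [Matrix.conjTranspose_eq_transpose_of_trivial] at this
  have hyx : ∀ x : Fin n → ℝ, y ⬝ᵥ (L *ᵥ x) = b ⬝ᵥ x := fun x => by
    rw [Matrix.dotProduct_mulVec, ← Matrix.mulVec_transpose, hsymm, hy]
  have hR0 : 0 ≤ R := by
    have := hpos y
    rw [hyx] at this
    rwa [hR]
  have hc : |p (θ + δ) - p θ| ≤ K * |δ| := by
    have := Convex.norm_image_sub_le_of_norm_deriv_le (f := p) (C := K) (s := Set.univ)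
      (x := θ) (y := θ + δ) (fun x _ => hp_diff x) (fun x _ => hp_lip x) convex_univ
      (Set.mem_univ _) (Set.mem_univ _)
    simpa using this
  have key : ∀ x : Fin n → ℝ, (b ⬝ᵥ x) ^ 2 ≤ R * (x ⬝ᵥ (L *ᵥ x)) ∨ R = 0 := fun x => by
    rcases hR0.eq_or_lt with h | h
    · exact Or.inr h.symm
    left
    have h1 := hpos (R • x - (b ⬝ᵥ x) • y)
    have h2 : (R • x - (b ⬝ᵥ x) • y) ⬝ᵥ (L *ᵥ (R • x - (b ⬝ᵥ x) • y))
        = R * (R * (x ⬝ᵥ (L *ᵥ x)) - (b ⬝ᵥ x) ^ 2) := by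
      simp only [Matrix.mulVec_sub, Matrix.mulVec_smul, sub_dotProduct, dotProduct_sub,
        smul_dotProduct, dotProduct_smul, hyx, hy, smul_eq_mul, dotProduct_comm x b,
        dotProduct_comm y b, ← hR]
      ring
    rw [h2] at h1
    have := nonneg_of_mul_nonneg_right h1 h
    linarith
  have hcR : R = 0 → p (θ + δ) - p θ = 0 := fun h => by
    rw [h] at hδ
    have : δ = 0 := by simpa using hδ
    simp [this]
  refine Matrix.PosSemidef.of_dotProduct_mulVec_nonneg ?_ ?_
  · ext i j
    have := congrFun (congrFun hsymm i) j
    simp only [Matrix.transpose_apply] at this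
    simp [Matrix.vecMulVec_apply, this, mul_comm]
  · intro x
    have e : star x ⬝ᵥ ((L + (p (θ + δ) - p θ) • Matrix.vecMulVec b b) *ᵥ x)
        = x ⬝ᵥ (L *ᵥ x) + (p (θ + δ) - p θ) * (b ⬝ᵥ x) ^ 2 := by
      simp [Matrix.add_mulVec, Matrix.smul_mulVec, Matrix.vecMulVec_mulVec, dotProduct_comm x b]
      left
      ring
    rw [e]
    have hx := hpos x
    by_cases h : R = 0
    · rw [hcR h]
      linarith
    have hk := (key x).resolve_right h
    have hRp : 0 < R := lt_of_le_of_ne hR0 (Ne.symm h)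
    have h3 : |p (θ + δ) - p θ| * R ≤ 1 := by
      calc |p (θ + δ) - p θ| * R ≤ (K * (K * R)⁻¹) * R := by gcongr; exact hc.trans (by gcongr)
        _ = 1 := by field_simp
    have h4 := neg_abs_le (p (θ + δ) - p θ)
    have h5 := mul_le_mul_of_nonneg_left hk (abs_nonneg (p (θ + δ) - p θ))
    have h6 := mul_le_mul_of_nonneg_right h3 hx
    have h7 := mul_le_mul_of_nonneg_right h4 (sq_nonneg (b ⬝ᵥ x))
    linarith
end

section
/- Let L ∈ ℝ^{n×n} be symmetric and let α, K_P, K_I ∈ ℝ. Define the block matrix M = [[K_P L + α Iₙ, −K_I L],[K_I L, 0_{n×n}]] ∈ ℝ^{2n×2n}. Then a complex number μ is an eigenvalue of M if and only if there exists an eigenvalue λ of L such that μ² − (α + K_P λ) μ + (K_I λ)² = 0. Equivalently, if λ₁,…,λₙ are the eigenvalues of L, the 2n eigenvalues of M are φ_i ± σ_i for i = 1,…,n, where φ_i = (α + K_P λ_i)/2 and σ_i = √(φ_i² − (K_I λ_i)²) (with the square root taken with nonnegative imaginary part). -/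
open Matrix BigOperators

lemma piace_aux_real {n : ℕ} (L : Matrix (Fin n) (Fin n) ℝ) (hH : L.IsHermitian) (w : Fin n → ℝ)
    (h : ∀ i, (hH.eigenvectorBasis i).ofLp ⬝ᵥ w = 0) : w = 0 := by
  have h2 : WithLp.toLp 2 w = (0 : EuclideanSpace ℝ (Fin n)) := by
    apply InnerProductSpace.ext_inner_left_basis (𝕜 := ℝ) hH.eigenvectorBasis.toBasis
    intro i
    have := h i
    simp only [OrthonormalBasis.coe_toBasis, inner_zero_right]
    rw [EuclideanSpace.inner_eq_star_dotProduct]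
    simpa [dotProduct_comm] using this
  simpa using congrArg WithLp.ofLp h2

lemma piace_aux_complex {n : ℕ} (L : Matrix (Fin n) (Fin n) ℝ) (hH : L.IsHermitian) (x : Fin n → ℂ)
    (h : ∀ i, (fun j => ((hH.eigenvectorBasis i).ofLp j : ℂ)) ⬝ᵥ x = 0) : x = 0 := by
  have h1 := piace_aux_real L hH (fun j => (x j).re) (fun i => by
    have := congrArg Complex.re (h i)
    simpa [dotProduct] using this)
  have h2 := piace_aux_real L hH (fun j => (x j).im) (fun i => by
    have := congrArg Complex.im (h i)
    simpa [dotProduct] using this)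
  funext j
  exact Complex.ext (congrFun h1 j) (congrFun h2 j)

lemma piace_aux_map {n : ℕ} (L : Matrix (Fin n) (Fin n) ℝ) (v : Fin n → ℝ) (lam : ℝ)
    (h : L *ᵥ v = lam • v) :
    (L.map (algebraMap ℝ ℂ)) *ᵥ (fun j => (v j : ℂ)) = (lam : ℂ) • (fun j => (v j : ℂ)) := by
  funext j
  have := congrArg (fun t : ℝ => (t : ℂ)) (congrFun h j)
  simpa [mulVec, dotProduct] using this

lemma piace_aux_block {n : ℕ} (L : Matrix (Fin n) (Fin n) ℝ) (α KP KI : ℝ) (x y : Fin n → ℂ) :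
    ((Matrix.fromBlocks (KP • L + α • (1 : Matrix (Fin n) (Fin n) ℝ))
      (-(KI • L)) (KI • L) (0 : Matrix (Fin n) (Fin n) ℝ)).map (algebraMap ℝ ℂ)) *ᵥ Sum.elim x y =
    Sum.elim ((KP : ℂ) • (L.map (algebraMap ℝ ℂ) *ᵥ x) + (α : ℂ) • x
      - (KI : ℂ) • (L.map (algebraMap ℝ ℂ) *ᵥ y)) ((KI : ℂ) • (L.map (algebraMap ℝ ℂ) *ᵥ x)) := by
  have e1 : (KP • L + α • (1 : Matrix (Fin n) (Fin n) ℝ)).map (algebraMap ℝ ℂ) =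
      (KP : ℂ) • L.map (algebraMap ℝ ℂ) + (α : ℂ) • 1 := by
    ext i j
    by_cases hij : i = j <;> simp [Matrix.one_apply, hij]
  have e2 : (KI • L).map (algebraMap ℝ ℂ) = (KI : ℂ) • L.map (algebraMap ℝ ℂ) := by
    ext i j
    simp
  have e3 : (-(KI • L)).map (algebraMap ℝ ℂ) = -((KI : ℂ) • L.map (algebraMap ℝ ℂ)) := by
    ext i j
    simp
  have e4 : (0 : Matrix (Fin n) (Fin n) ℝ).map (algebraMap ℝ ℂ) = 0 := by
    ext i j
    simp
  rw [Matrix.fromBlocks_map, e1, e2, e3, e4, Matrix.fromBlocks_mulVec]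
  simp only [Sum.elim_comp_inl, Sum.elim_comp_inr, add_mulVec, smul_mulVec, neg_mulVec, one_mulVec,
    zero_mulVec, add_zero, sub_eq_add_neg]

/-- **Proposition 3 of the paper.** For symmetric `L` and the PI-ACE
update matrix `M = [[K_P L + α I, -K_I L], [K_I L, 0]]`, a complex number `μ` is an
eigenvalue of `M` if and only if there is an eigenvalue `λ` of `L` with
`μ² - (α + K_P λ) μ + (K_I λ)² = 0` (equivalently, the `2n` eigenvalues of `M` are
`φ_i ± σ_i` with `φ_i = (α + K_P λ_i)/2`, `σ_i = √(φ_i² - (K_I λ_i)²)`). -/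
theorem piace_block_matrix_eigenvalues
    {n : ℕ} (L : Matrix (Fin n) (Fin n) ℝ) (hL : L.IsSymm)
    (α KP KI : ℝ)
    (M : Matrix (Fin n ⊕ Fin n) (Fin n ⊕ Fin n) ℝ)
    (hM : M = Matrix.fromBlocks (KP • L + α • (1 : Matrix (Fin n) (Fin n) ℝ))
      (-(KI • L)) (KI • L) (0 : Matrix (Fin n) (Fin n) ℝ))
    (μ : ℂ) :
    Module.End.HasEigenvalue (Matrix.toLin' (M.map (algebraMap ℝ ℂ))) μ ↔
      ∃ lam : ℝ, Module.End.HasEigenvalue (Matrix.toLin' L) lam ∧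
        μ ^ 2 - (α + KP * lam : ℝ) * μ + ((KI * lam : ℝ) : ℂ) ^ 2 = 0 := by
  subst hM
  have hH : L.IsHermitian := by
    rw [Matrix.IsHermitian, Matrix.conjTranspose_eq_transpose_of_trivial]
    exact hL
  constructor
  · intro h
    obtain ⟨z, hz⟩ := h.exists_hasEigenvector
    have hz0 := hz.2
    have hz1 := hz.apply_eq_smul
    obtain ⟨x, y, rfl⟩ : ∃ x y, z = Sum.elim x y := ⟨z ∘ Sum.inl, z ∘ Sum.inr, by simp⟩
    rw [Matrix.toLin'_apply, piace_aux_block] at hz1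
    have hx : (KP : ℂ) • (L.map (algebraMap ℝ ℂ) *ᵥ x) + (α : ℂ) • x
      - (KI : ℂ) • (L.map (algebraMap ℝ ℂ) *ᵥ y) = μ • x := by
      funext j
      exact congrFun hz1 (Sum.inl j)
    have hy : (KI : ℂ) • (L.map (algebraMap ℝ ℂ) *ᵥ x) = μ • y := by
      funext j
      exact congrFun hz1 (Sum.inr j)
    have hex : ∃ i, (fun j => ((hH.eigenvectorBasis i).ofLp j : ℂ)) ⬝ᵥ x ≠ 0 ∨
        (fun j => ((hH.eigenvectorBasis i).ofLp j : ℂ)) ⬝ᵥ y ≠ 0 := by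
      by_contra hcon
      push Not at hcon
      apply hz0
      rw [piace_aux_complex L hH x fun i => (hcon i).1, piace_aux_complex L hH y fun i => (hcon i).2]
      simp
    obtain ⟨i, hi⟩ := hex
    have hev := hH.mulVec_eigenvectorBasis i
    have hev0 : (hH.eigenvectorBasis i).ofLp ≠ 0 := by
      intro h0
      exact hH.eigenvectorBasis.orthonormal.ne_zero i (by ext j; simp [h0])
    have hc := piace_aux_map L _ _ hev
    set U : Fin n → ℂ := fun j => ((hH.eigenvectorBasis i).ofLp j : ℂ) with hU
    set lam := hH.eigenvalues i with hlam
    have hdot : ∀ w, U ⬝ᵥ (L.map (algebraMap ℝ ℂ) *ᵥ w) = lam * (U ⬝ᵥ w) := by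
      intro w
      have hT : (L.map (algebraMap ℝ ℂ))ᵀ = L.map (algebraMap ℝ ℂ) := by
        rw [← Matrix.transpose_map, hL]
      rw [Matrix.dotProduct_mulVec, ← Matrix.mulVec_transpose, hT, hc, smul_dotProduct, smul_eq_mul]
    refine ⟨lam, ?_, ?_⟩
    · apply Module.End.hasEigenvalue_of_hasEigenvector (x := (hH.eigenvectorBasis i).ofLp)
      exact ⟨Module.End.mem_eigenspace_iff.2 (by rw [Matrix.toLin'_apply]; exact hev), hev0⟩
    · have h1 := congrArg (fun t => U ⬝ᵥ t) hx
      have h2 := congrArg (fun t => U ⬝ᵥ t) hy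
      simp only [dotProduct_sub, dotProduct_add, dotProduct_smul, hdot, smul_eq_mul] at h1 h2
      push_cast
      rcases hi with hi | hi
      · apply mul_left_cancel₀ hi
        linear_combination (-μ) * h1 + KI * lam * h2
      · apply mul_left_cancel₀ hi
        linear_combination (-KI * lam : ℂ) * h1 + (-(μ - α - KP * lam)) * h2
  · rintro ⟨lam, h, hq⟩
    obtain ⟨v, hv⟩ := h.exists_hasEigenvector
    have hv0 := hv.2
    have hv1 := hv.apply_eq_smul
    rw [Matrix.toLin'_apply] at hv1
    have hc := piace_aux_map L _ _ hv1
    push_cast at hq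
    have hab : ∃ a b : ℂ, (a ≠ 0 ∨ b ≠ 0) ∧ (KP * lam + α) * a - KI * lam * b = μ * a ∧
        KI * lam * a = μ * b := by
      by_cases hk : μ = 0 ∧ (KI * lam : ℂ) = 0
      · exact ⟨0, 1, by simp, by simp [hk.2], by simp [hk.1]⟩
      · refine ⟨μ, KI * lam, ?_, by linear_combination -hq, by ring⟩
        by_contra hcon
        push Not at hcon
        exact hk hcon
    obtain ⟨a, b, hne, h1, h2⟩ := hab
    obtain ⟨j, hj⟩ := Function.ne_iff.1 hv0
    have hj' : (v j : ℂ) ≠ 0 := by exact_mod_cast hj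
    apply Module.End.hasEigenvalue_of_hasEigenvector
      (x := Sum.elim (a • fun j => (v j : ℂ)) (b • fun j => (v j : ℂ)))
    refine ⟨Module.End.mem_eigenspace_iff.2 ?_, ?_⟩
    · rw [Matrix.toLin'_apply, piace_aux_block]
      simp only [mulVec_smul, hc]
      funext k
      rcases k with k | k
      · simp
        linear_combination (v k : ℂ) * h1
      · simp
        linear_combination (v k : ℂ) * h2
    · intro h0
      have ha := congrFun h0 (Sum.inl j)
      have hb := congrFun h0 (Sum.inr j)
      simp at ha hb
      rcases hne with hne | hne
      · exact (ha.resolve_left hne |> fun t => hj (by simpa using t))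
      · exact (hb.resolve_left hne |> fun t => hj (by simpa using t))
end

section
/- Let L ∈ ℝ^{n×n} be the Laplacian of a connected graph, i.e. symmetric positive semidefinite with zero as an algebraically simple eigenvalue whose eigenspace is span{1ₙ}, and let α, K_P, K_I > 0. Then the block matrix M = [[K_P L + α Iₙ, −K_I L],[K_I L, 0_{n×n}]] has zero as an algebraically simple eigenvalue, and every other eigenvalue μ ∈ ℂ of M satisfies Re μ > 0. -/
open Matrix BigOperators

open Polynomial in
lemma charpoly_diag_blocks {n : ℕ} (a b c : Fin n → ℝ) :
    (Matrix.fromBlocks (diagonal a) (diagonal b) (diagonal c)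
      (0 : Matrix (Fin n) (Fin n) ℝ)).charpoly
      = ∏ i, ((X - C (a i)) * X - C (b i * c i)) := by
  have hX : (diagonal (fun _ : Fin n => (X : ℝ[X]))).det ≠ 0 := by
    rw [det_diagonal]
    simp
  apply mul_right_cancel₀ hX
  have e : (Matrix.fromBlocks (diagonal a) (diagonal b) (diagonal c)
      (0 : Matrix (Fin n) (Fin n) ℝ)).charmatrix =
      fromBlocks (diagonal fun i => X - C (a i)) (diagonal fun i => - C (b i))
        (diagonal fun i => - C (c i)) (diagonal fun _ => X) := by
    rw [charmatrix_fromBlocks]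
    congr 1
    · ext i j : 1
      by_cases h : i = j <;> simp [charmatrix_apply, h]
    · ext i j : 1
      by_cases h : i = j <;> simp [h]
    · ext i j : 1
      by_cases h : i = j <;> simp [h]
    · ext i j : 1
      by_cases h : i = j <;> simp [charmatrix_apply, h]
  have h2 : fromBlocks (diagonal fun i => X - C (a i)) (diagonal fun i => - C (b i))
        (diagonal fun i => - C (c i)) (diagonal fun _ => (X : ℝ[X])) *
      fromBlocks (diagonal fun _ => X) 0 (diagonal fun i => C (c i)) 1 =
      fromBlocks (diagonal fun i => (X - C (a i)) * X - C (b i * c i))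
        (diagonal fun i => - C (b i)) 0 (diagonal fun _ => X) := by
    rw [fromBlocks_multiply]
    congr 1
    · ext i j : 1
      by_cases h : i = j <;> simp [h]
      ring
    · simp
    · ext i j : 1
      by_cases h : i = j <;> simp [h]
    · simp
  have h3 := congrArg det h2
  rw [det_mul, det_fromBlocks_zero₁₂, det_fromBlocks_zero₂₁, det_one, mul_one] at h3
  rw [charpoly, e, h3, det_diagonal (d := fun i => (X - C (a i)) * X - C (b i * c i))]

open Polynomial in
lemma rootMultiplicity_prod_aux {ι : Type*} (s : Finset ι) (f : ι → ℝ[X])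
    (hf : ∀ i, f i ≠ 0) :
    (∏ i ∈ s, f i).rootMultiplicity 0 = ∑ i ∈ s, (f i).rootMultiplicity 0 := by
  classical
  induction s using Finset.induction_on with
  | empty => simp
  | insert i s hi ih =>
    rw [Finset.prod_insert hi, Finset.sum_insert hi, rootMultiplicity_mul, ih]
    exact mul_ne_zero (hf i) (Finset.prod_ne_zero_iff.2 fun j _ => hf j)

open Polynomial in
lemma charpoly_piace {n : ℕ} (L : Matrix (Fin n) (Fin n) ℝ) (hL : L.IsHermitian)
    (α KP KI : ℝ) :
    (Matrix.fromBlocks (KP • L + α • (1 : Matrix (Fin n) (Fin n) ℝ))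
      (-(KI • L)) (KI • L) (0 : Matrix (Fin n) (Fin n) ℝ)).charpoly =
    ∏ i, ((X - C (KP * hL.eigenvalues i + α)) * X
      - C (-(KI * hL.eigenvalues i) * (KI * hL.eigenvalues i))) := by
  rw [← charpoly_diag_blocks]
  obtain ⟨U, V, hUV, hVU, hLU⟩ : ∃ U V : Matrix (Fin n) (Fin n) ℝ, U * V = 1 ∧ V * U = 1 ∧
      L = U * diagonal hL.eigenvalues * V := by
    refine ⟨hL.eigenvectorUnitary, star (hL.eigenvectorUnitary : Matrix (Fin n) (Fin n) ℝ),
      Unitary.coe_mul_star_self _, Unitary.coe_star_mul_self _, ?_⟩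
    have h := hL.spectral_theorem
    rw [Unitary.conjStarAlgAut_apply] at h
    exact h
  set d := hL.eigenvalues
  have e1 : (diagonal fun i => KP * d i + α) = KP • diagonal d + α • 1 := by
    ext i j
    by_cases h : i = j <;> simp [h]
  have e2 : (diagonal fun i => -(KI * d i)) = -(KI • diagonal d) := by
    ext i j
    by_cases h : i = j <;> simp [h]
  have e3 : (diagonal fun i => KI * d i) = KI • diagonal d := by
    ext i j
    by_cases h : i = j <;> simp [h]
  rw [e1, e2, e3]
  have key : Matrix.fromBlocks (KP • L + α • (1 : Matrix (Fin n) (Fin n) ℝ))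
      (-(KI • L)) (KI • L) (0 : Matrix (Fin n) (Fin n) ℝ) =
      fromBlocks U 0 0 U * (fromBlocks (KP • diagonal d + α • 1) (-(KI • diagonal d))
        (KI • diagonal d) 0 * fromBlocks V 0 0 V) := by
    rw [fromBlocks_multiply, fromBlocks_multiply, hLU]
    simp [mul_add, add_mul, mul_assoc, hUV]
  rw [key, charpoly_mul_comm, mul_assoc, fromBlocks_multiply]
  simp [hVU]

open Polynomial in
lemma rootMult_quad (α KP KI d : ℝ) (hα : 0 < α) (hKI : 0 < KI) :
    ((X - C (KP * d + α)) * X - C (-(KI * d) * (KI * d))).rootMultiplicity 0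
      = (X - C d).rootMultiplicity 0 := by
  by_cases h : d = 0
  · subst h
    have h0 : (X - C α) * (X : ℝ[X]) ≠ 0 := mul_ne_zero (X_sub_C_ne_zero α) X_ne_zero
    have hx : rootMultiplicity 0 (X - C α) = 0 := by
      apply rootMultiplicity_eq_zero
      simp [hα.ne']
    simp [rootMultiplicity_mul h0, hx]
  · rw [rootMultiplicity_eq_zero, rootMultiplicity_eq_zero]
    · simp [h]
    · simp [h, hKI.ne']

lemma re_pos_quad (a b : ℝ) (ha : 0 < a) (hb : 0 ≤ b) (μ : ℂ) (hμ : μ ≠ 0)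
    (h : (μ - a) * μ + b = 0) : 0 < μ.re := by
  have h1 := congrArg Complex.re h
  have h2 := congrArg Complex.im h
  simp at h1 h2
  by_cases him : μ.im = 0
  · have hre : μ.re ≠ 0 := fun hr => hμ (Complex.ext hr him)
    rw [him] at h1
    by_contra hn
    have : μ.re < 0 := lt_of_le_of_ne (not_lt.1 hn) hre
    nlinarith [mul_pos_of_neg_of_neg this this]
  · have : μ.im * (2 * μ.re - a) = 0 := by linarith
    rcases mul_eq_zero.1 this with h | h
    · exact absurd h him
    · linarith

/-- For the Laplacian `L` of a connected graph (symmetric PSD with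
algebraically simple zero eigenvalue and eigenspace `span{1ₙ}`) and `α, K_P, K_I > 0`,
the PI-ACE update matrix `M = [[K_P L + α I, -K_I L], [K_I L, 0]]` has zero as an
algebraically simple eigenvalue and all its other eigenvalues have positive real part. -/
theorem piace_block_matrix_stability
    {n : ℕ} (L : Matrix (Fin n) (Fin n) ℝ)
    (hPSD : L.PosSemidef)
    (hsimple : (Matrix.charpoly L).rootMultiplicity 0 = 1)
    (hker : ∀ x : Fin n → ℝ, L.mulVec x = 0 ↔ ∃ c : ℝ, x = fun _ => c)
    (α KP KI : ℝ) (hα : 0 < α) (hKP : 0 < KP) (hKI : 0 < KI)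
    (M : Matrix (Fin n ⊕ Fin n) (Fin n ⊕ Fin n) ℝ)
    (hM : M = Matrix.fromBlocks (KP • L + α • (1 : Matrix (Fin n) (Fin n) ℝ))
      (-(KI • L)) (KI • L) (0 : Matrix (Fin n) (Fin n) ℝ)) :
    (Matrix.charpoly (M.map (algebraMap ℝ ℂ))).rootMultiplicity 0 = 1 ∧
      ∀ μ : ℂ, Module.End.HasEigenvalue
          (Matrix.toLin' (M.map (algebraMap ℝ ℂ))) μ → μ ≠ 0 → 0 < μ.re := by
  classical
  have hL := hPSD.isHermitian
  have hc := charpoly_piace L hL α KP KI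
  rw [← hM] at hc
  have hmap : (M.map (algebraMap ℝ ℂ)).charpoly = M.charpoly.map (algebraMap ℝ ℂ) :=
    Matrix.charpoly_map M _
  constructor
  · have h0 := Polynomial.eq_rootMultiplicity_map (p := M.charpoly)
      (algebraMap ℝ ℂ).injective 0
    rw [map_zero] at h0
    rw [hmap, ← h0, hc, rootMultiplicity_prod_aux]
    · rw [hL.charpoly_eq, rootMultiplicity_prod_aux _ _
        (fun i => Polynomial.X_sub_C_ne_zero _)] at hsimple
      rw [← hsimple]
      exact Finset.sum_congr rfl fun i _ => rootMult_quad α KP KI _ hα hKI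
    · intro i hi
      have := congrArg (fun p => Polynomial.coeff p 2) hi
      simp [sub_mul, Polynomial.coeff_X, Polynomial.coeff_C, ← Polynomial.C_mul,
        -Polynomial.C_neg, -map_neg, -map_mul, -map_add] at this
  · intro μ hμ h0
    rw [Module.End.hasEigenvalue_iff_isRoot_charpoly, Matrix.charpoly_toLin', hmap, hc,
      Polynomial.IsRoot, Polynomial.eval_map, Polynomial.eval₂_finsetProd,
      Finset.prod_eq_zero_iff] at hμ
    obtain ⟨i, -, hi⟩ := hμ
    have hd := hPSD.eigenvalues_nonneg i
    refine re_pos_quad (KP * hL.eigenvalues i + α)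
      ((KI * hL.eigenvalues i) * (KI * hL.eigenvalues i)) (by positivity) (by positivity) μ h0 ?_
    rw [← hi]
    simp
end

section
/- Let L₀ = E Eᵀ be the unweighted Laplacian of a connected graph G and let α, K_P, K_I > 0. Let G_P be the graph G with every edge weight equal to K_P, so its Laplacian is L_P = K_P L₀, and let R_uv(G_P) be the effective resistance between u and v in G_P. Let the decoding function p_uv for the K_P-subcodeword of a fixed edge (u,v) ∈ E be concave, differentiable, and Lipschitz with constant K_uv > 0, with nominal value p_uv(θ_uv) = K_P. If a single-edge injection attack δ (perturbing only this subcodeword, with all α- and K_I-subcodewords unperturbed) satisfies |δ| ≤ (K_uv · R_uv(G_P))⁻¹, then the perturbed PI-ACE update matrix M̄ = [[K_P L₀ + (p_uv(θ_uv+δ) − K_P) b bᵀ + α Iₙ, −K_I L₀],[K_I L₀, 0_{n×n}]], with b = e_u − e_v, has zero as a simple eigenvalue and all other eigenvalues with positive real part, i.e. the perturbed second-order estimator protocol is stable; this holds for all α, K_P, K_I > 0 and independently of the codeword value θ_uv. -/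
open Matrix BigOperators

lemma aux_core {n : ℕ} (i0 : Fin n) (A L : Matrix (Fin n) (Fin n) ℝ) (α K : ℝ) (hα : 0 < α)
    (hK : 0 < K)
    (hsym : ∀ x y : Fin n → ℝ, x ⬝ᵥ (L *ᵥ y) = y ⬝ᵥ (L *ᵥ x))
    (hker : ∀ x : Fin n → ℝ, L.mulVec x = 0 ↔ ∃ c : ℝ, x = fun _ => c)
    (hA : ∀ x : Fin n → ℝ, α * (x ⬝ᵥ x) ≤ x ⬝ᵥ (A *ᵥ x))
    (M : Matrix (Fin n ⊕ Fin n) (Fin n ⊕ Fin n) ℝ)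
    (hM : M = Matrix.fromBlocks A (-(K • L)) (K • L) 0) :
    (Matrix.charpoly (M.map (algebraMap ℝ ℂ))).rootMultiplicity 0 = 1 ∧
      ∀ μ : ℂ, Module.End.HasEigenvalue
          (Matrix.toLin' (M.map (algebraMap ℝ ℂ))) μ → μ ≠ 0 → 0 < μ.re := by
  have hMv : ∀ w, M *ᵥ w = Sum.elim (A *ᵥ (w ∘ Sum.inl) - K • (L *ᵥ (w ∘ Sum.inr)))
      (K • (L *ᵥ (w ∘ Sum.inl))) := by
    intro w
    rw [hM, fromBlocks_mulVec]
    simp [neg_mulVec, smul_mulVec, sub_eq_add_neg]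
  have hdot : ∀ w w' : Fin n ⊕ Fin n → ℝ, w ⬝ᵥ w' =
      (w ∘ Sum.inl) ⬝ᵥ (w' ∘ Sum.inl) + (w ∘ Sum.inr) ⬝ᵥ (w' ∘ Sum.inr) := by
    intro w w'
    simp [dotProduct, Fintype.sum_sum_type]
  have hq : ∀ w, w ⬝ᵥ (M *ᵥ w) = (w ∘ Sum.inl) ⬝ᵥ (A *ᵥ (w ∘ Sum.inl)) := by
    intro w
    rw [hdot, hMv, Sum.elim_comp_inl, Sum.elim_comp_inr, dotProduct_sub, dotProduct_smul,
      dotProduct_smul, hsym]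
    ring
  have hnn : ∀ x : Fin n → ℝ, 0 ≤ x ⬝ᵥ x := fun x =>
    Finset.sum_nonneg fun i _ => mul_self_nonneg (x i)
  have hnn' : ∀ x : Fin n ⊕ Fin n → ℝ, 0 ≤ x ⬝ᵥ x := fun x =>
    Finset.sum_nonneg fun i _ => mul_self_nonneg (x i)
  have hz : ∀ x : Fin n → ℝ, x ⬝ᵥ x ≤ 0 → x = 0 := fun x h =>
    dotProduct_self_eq_zero.1 (le_antisymm h (hnn x))
  set e : Fin n ⊕ Fin n → ℝ := Sum.elim 0 (fun _ => 1) with he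
  have hL1 : L *ᵥ (fun _ => (1 : ℝ)) = 0 := (hker _).2 ⟨1, rfl⟩
  have hker0 : ∀ w, M *ᵥ w = 0 → ∃ s : ℝ, w = s • e := by
    intro w hw
    have h1 := hq w
    rw [hw, dotProduct_zero] at h1
    have h2 := hA (w ∘ Sum.inl)
    have hx : w ∘ Sum.inl = 0 := hz _ (by nlinarith [hnn (w ∘ Sum.inl)])
    rw [hMv, hx] at hw
    have h3 : L *ᵥ (w ∘ Sum.inr) = 0 := by
      ext i
      have := congrFun hw (Sum.inl i)
      simpa [hK.ne'] using this
    obtain ⟨s, hs⟩ := (hker _).1 h3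
    refine ⟨s, ?_⟩
    ext i
    rcases i with i | i
    · simpa [he] using congrFun hx i
    · simpa [he] using congrFun hs i
  have hMe : M *ᵥ e = 0 := by
    rw [hMv]
    ext i
    rcases i with i | i <;> simp [he, hL1]
  have hker1 : ∀ w (s : ℝ), M *ᵥ w = s • e → M *ᵥ w = 0 := by
    intro w s hw
    have h1 : K • (L *ᵥ (w ∘ Sum.inl)) = fun _ => s := by
      ext i
      have := congrFun hw (Sum.inr i)
      rw [hMv] at this
      simpa [he] using this
    have h2 : (fun _ => (1 : ℝ)) ⬝ᵥ (K • (L *ᵥ (w ∘ Sum.inl))) = 0 := by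
      rw [dotProduct_smul, hsym, hL1]; simp
    rw [h1] at h2
    have hn : (n : ℝ) ≠ 0 := by
      have : 0 < n := i0.pos
      positivity
    have hs : s = 0 := by
      simpa [dotProduct, hn] using h2
    rw [hw, hs, zero_smul]
  constructor
  · rw [Matrix.charpoly_map]
    have := Polynomial.eq_rootMultiplicity_map (p := M.charpoly)
      (f := algebraMap ℝ ℂ) (algebraMap ℝ ℂ).injective 0
    rw [map_zero] at this
    rw [← this, ← Matrix.charpoly_toLin', ← LinearMap.finrank_maxGenEigenspace_eq]
    have hspan : Module.End.maxGenEigenspace (Matrix.toLin' M) 0 = Submodule.span ℝ {e} := by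
      ext w
      rw [Module.End.mem_maxGenEigenspace, Submodule.mem_span_singleton]
      simp only [zero_smul, sub_zero]
      constructor
      · rintro ⟨k, hk⟩
        have key : ∀ k w, ((Matrix.toLin' M) ^ k) w = 0 → M *ᵥ w = 0 := by
          intro k
          induction k with
          | zero => intro w hw; simp at hw; simp [hw]
          | succ k ih =>
            intro w hw
            rw [pow_succ, Module.End.mul_apply] at hw
            have h1 := ih _ hw
            rw [Matrix.toLin'_apply] at h1
            obtain ⟨s, hs⟩ := hker0 _ h1
            exact hker1 _ s hs
        obtain ⟨s, hs⟩ := hker0 _ (key k w hk)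
        exact ⟨s, hs.symm⟩
      · rintro ⟨s, rfl⟩
        exact ⟨1, by simp [mulVec_smul, hMe]⟩
    rw [hspan]
    apply finrank_span_singleton
    intro h
    have := congrFun h (Sum.inr i0)
    simp [he] at this
  · intro μ hμ hμ0
    obtain ⟨W, hW⟩ := hμ.exists_hasEigenvector
    have hW1 := hW.apply_eq_smul
    have hW0 := hW.2
    rw [Matrix.toLin'_apply] at hW1
    set a : Fin n ⊕ Fin n → ℝ := fun i => (W i).re with ha
    set c : Fin n ⊕ Fin n → ℝ := fun i => (W i).im with hc
    have hre : M *ᵥ a = μ.re • a - μ.im • c := by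
      ext i
      have := congrArg Complex.re (congrFun hW1 i)
      simpa [mulVec, dotProduct, ha, hc] using this
    have him : M *ᵥ c = μ.re • c + μ.im • a := by
      ext i
      have := congrArg Complex.im (congrFun hW1 i)
      simpa [mulVec, dotProduct, ha, hc] using this
    have e1 := hq a
    have e2 := hq c
    rw [hre, dotProduct_sub, dotProduct_smul, dotProduct_smul] at e1
    rw [him, dotProduct_add, dotProduct_smul, dotProduct_smul, dotProduct_comm c a] at e2
    simp only [smul_eq_mul] at e1 e2
    by_contra! hneg
    have f1 := hA (a ∘ Sum.inl)
    have f2 := hA (c ∘ Sum.inl)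
    have g1 := hnn (a ∘ Sum.inl)
    have g2 := hnn (c ∘ Sum.inl)
    have hs : α * (a ∘ Sum.inl ⬝ᵥ a ∘ Sum.inl + c ∘ Sum.inl ⬝ᵥ c ∘ Sum.inl) ≤ 0 := by
      have := mul_nonneg (neg_nonneg.2 hneg) (add_nonneg (hnn' a) (hnn' c))
      nlinarith
    have hs' : a ∘ Sum.inl ⬝ᵥ a ∘ Sum.inl + c ∘ Sum.inl ⬝ᵥ c ∘ Sum.inl ≤ 0 := by
      by_contra! h
      nlinarith [mul_pos hα h]
    have ha0 : a ∘ Sum.inl = 0 := hz _ (by linarith)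
    have hc0 : c ∘ Sum.inl = 0 := hz _ (by linarith)
    apply hW0
    have hbot : ∀ i, W (Sum.inr i) = 0 := by
      intro i
      have r1 := congrFun hre (Sum.inr i)
      have r2 := congrFun him (Sum.inr i)
      rw [hMv, ha0] at r1
      rw [hMv, hc0] at r2
      simp [ha, hc] at r1 r2
      have : μ * W (Sum.inr i) = 0 := by
        apply Complex.ext
        · simp; linarith
        · simp; linarith
      exact (mul_eq_zero.1 this).resolve_left hμ0
    ext i
    rcases i with i | i
    · apply Complex.ext
      · simpa [ha] using congrFun ha0 i
      · simpa [hc] using congrFun hc0 i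
    · exact hbot i

/-- **Corollary 1 of the paper.** For the unweighted Laplacian
`L₀ = E Eᵀ` of a connected graph, gains `α, K_P, K_I > 0`, and a concave,
differentiable, `K_uv`-Lipschitz decoding function `p_uv` with nominal value
`p_uv(θ_uv) = K_P`, a single-edge attack `δ` on the `K_P`-subcodeword of edge `(u,v)`
with `|δ| ≤ (K_uv · R_uv(G_P))⁻¹` (effective resistance in the uniformly `K_P`-weighted
graph) leaves the perturbed PI-ACE update matrix with a simple zero eigenvalue and all
other eigenvalues in the open right half plane, for every codeword `θ_uv`. -/
theorem piace_perturbed_KP_single_edge_stability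
    {n m : ℕ} (Em : Matrix (Fin n) (Fin m) ℝ)
    (hinc : ∀ k : Fin m, ∃ i j : Fin n, i ≠ j ∧
      ∀ l, Em l k = (if l = i then (1 : ℝ) else 0) - (if l = j then 1 else 0))
    (L0 : Matrix (Fin n) (Fin n) ℝ)
    (hL0 : L0 = Em * Em.transpose)
    -- connectivity: the kernel of `L₀` is exactly the span of the all-ones vector
    (hker : ∀ x : Fin n → ℝ, L0.mulVec x = 0 ↔ ∃ c : ℝ, x = fun _ => c)
    (α KP KI : ℝ) (hα : 0 < α) (hKP : 0 < KP) (hKI : 0 < KI)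
    (u v : Fin n) (huv : u ≠ v)
    (b : Fin n → ℝ)
    (hb : b = fun i => (if i = u then (1 : ℝ) else 0) - (if i = v then 1 else 0))
    -- `(u,v)` is an edge of the graph
    (hedge : ∃ k : Fin m, (∀ l, Em l k = b l) ∨ (∀ l, Em l k = -(b l)))
    -- decoding function of the `K_P`-subcodeword of edge `(u,v)`
    (p : ℝ → ℝ) (Kuv : ℝ) (hKuv : 0 < Kuv)
    (hp_diff : Differentiable ℝ p)
    (hp_conc : ConcaveOn ℝ Set.univ p)
    (hp_lip : ∀ η : ℝ, |deriv p η| ≤ Kuv)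
    (θ : ℝ) (hθ : p θ = KP)
    -- effective resistance between `u` and `v` in `G_P` (Laplacian `K_P L₀`)
    (y : Fin n → ℝ) (hy : (KP • L0).mulVec y = b)
    (R : ℝ) (hR : R = b ⬝ᵥ y)
    (δ : ℝ) (hδ : |δ| ≤ (Kuv * R)⁻¹)
    (Mbar : Matrix (Fin n ⊕ Fin n) (Fin n ⊕ Fin n) ℝ)
    (hMbar : Mbar = Matrix.fromBlocks
      (KP • L0 + (p (θ + δ) - KP) • Matrix.vecMulVec b b
        + α • (1 : Matrix (Fin n) (Fin n) ℝ))
      (-(KI • L0)) (KI • L0) (0 : Matrix (Fin n) (Fin n) ℝ)) :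
    (Matrix.charpoly (Mbar.map (algebraMap ℝ ℂ))).rootMultiplicity 0 = 1 ∧
      ∀ μ : ℂ, Module.End.HasEigenvalue
          (Matrix.toLin' (Mbar.map (algebraMap ℝ ℂ))) μ → μ ≠ 0 → 0 < μ.re := by
  have hLq : ∀ x z : Fin n → ℝ, x ⬝ᵥ (L0 *ᵥ z) = (x ᵥ* Em) ⬝ᵥ (z ᵥ* Em) := by
    intro x z
    rw [hL0, ← mulVec_mulVec, dotProduct_mulVec, mulVec_transpose]
  have hsym : ∀ x z : Fin n → ℝ, x ⬝ᵥ (L0 *ᵥ z) = z ⬝ᵥ (L0 *ᵥ x) := by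
    intro x z
    rw [hLq, hLq, dotProduct_comm]
  have hnn : ∀ x : Fin n → ℝ, 0 ≤ x ⬝ᵥ (L0 *ᵥ x) := by
    intro x
    rw [hLq]
    exact Finset.sum_nonneg fun i _ => mul_self_nonneg _
  have hcs : ∀ x z : Fin n → ℝ, (x ⬝ᵥ (L0 *ᵥ z)) ^ 2 ≤
      (x ⬝ᵥ (L0 *ᵥ x)) * (z ⬝ᵥ (L0 *ᵥ z)) := by
    intro x z
    rw [hLq, hLq, hLq]
    have := Finset.sum_mul_sq_le_sq_mul_sq Finset.univ (x ᵥ* Em) (z ᵥ* Em)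
    simpa [dotProduct, sq] using this
  rw [smul_mulVec] at hy
  have hbx : ∀ x, b ⬝ᵥ x = KP * (x ⬝ᵥ (L0 *ᵥ y)) := by
    intro x
    rw [dotProduct_comm, ← hy, dotProduct_smul, smul_eq_mul]
  have hRy : R = KP * (y ⬝ᵥ (L0 *ᵥ y)) := by rw [hR, hbx]
  have hbb : b ≠ 0 := by
    intro h
    have := congrFun h u
    simp [hb, huv] at this
  have hRpos : 0 < R := by
    rcases (hnn y).lt_or_eq with h | h
    · rw [hRy]; positivity
    · exfalso
      apply hbb
      rw [← dotProduct_self_eq_zero, hbx]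
      have := hcs b y
      rw [← h, mul_zero] at this
      have h0 : b ⬝ᵥ (L0 *ᵥ y) = 0 := by nlinarith
      rw [h0, mul_zero]
  have hc : |p (θ + δ) - KP| * R ≤ 1 := by
    have h1 : ‖p (θ + δ) - p θ‖ ≤ Kuv * ‖(θ + δ) - θ‖ :=
      Convex.norm_image_sub_le_of_norm_deriv_le (s := Set.univ)
        (fun x _ => hp_diff x) (fun x _ => hp_lip x) convex_univ trivial trivial
    rw [hθ, add_sub_cancel_left, Real.norm_eq_abs, Real.norm_eq_abs] at h1
    calc |p (θ + δ) - KP| * R ≤ (Kuv * |δ|) * R := by gcongr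
      _ = |δ| * (Kuv * R) := by ring
      _ ≤ (Kuv * R)⁻¹ * (Kuv * R) := by gcongr
      _ = 1 := inv_mul_cancel₀ (by positivity)
  refine aux_core u _ L0 α KI hα hKI hsym hker ?_ Mbar hMbar
  intro x
  set c := p (θ + δ) - KP
  have hexp : x ⬝ᵥ ((KP • L0 + c • vecMulVec b b + α • (1 : Matrix (Fin n) (Fin n) ℝ)) *ᵥ x)
      = KP * (x ⬝ᵥ (L0 *ᵥ x)) + c * (b ⬝ᵥ x) ^ 2 + α * (x ⬝ᵥ x) := by
    simp only [add_mulVec, smul_mulVec, vecMulVec_mulVec, one_mulVec, dotProduct_add,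
      dotProduct_smul, smul_eq_mul, op_smul_eq_smul]
    rw [dotProduct_comm x b]
    ring
  rw [hexp]
  have h1 : (b ⬝ᵥ x) ^ 2 ≤ R * (KP * (x ⬝ᵥ (L0 *ᵥ x))) := by
    rw [hbx, hRy]
    have := mul_le_mul_of_nonneg_left (hcs x y) (sq_nonneg KP)
    nlinarith
  have hq := mul_nonneg hKP.le (hnn x)
  have h2 : |c| * (b ⬝ᵥ x) ^ 2 ≤ KP * (x ⬝ᵥ (L0 *ᵥ x)) := by
    calc |c| * (b ⬝ᵥ x) ^ 2 ≤ |c| * (R * (KP * (x ⬝ᵥ (L0 *ᵥ x)))) := by gcongr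
      _ = (|c| * R) * (KP * (x ⬝ᵥ (L0 *ᵥ x))) := by ring
      _ ≤ 1 * (KP * (x ⬝ᵥ (L0 *ᵥ x))) := by gcongr
      _ = _ := one_mul _
  have h3 := mul_le_mul_of_nonneg_right (neg_abs_le c) (sq_nonneg (b ⬝ᵥ x))
  linarith
end

section
/- Let L = E Eᵀ be the unweighted Laplacian of a connected graph with eigenvalues 0 = λ₁ < λ₂ ≤ … ≤ λₙ. Let p^(α), p^(K_P), p^(K_I) : ℝ → ℝ be concave, differentiable, Lipschitz decoding functions with Lipschitz constants K_α, K_{K_P}, K_{K_I} > 0 and nominal values p^(α)(θ_α) = α > 0, p^(K_P)(θ_{K_P}) = K_P > 0, p^(K_I)(θ_{K_I}) = K_I > 0. Suppose the scalar injection attacks δ_α, δ_{K_P}, δ_{K_I} satisfy |δ_α| < α/K_α, |δ_{K_P}| < (α − K_α|δ_α| + λₙ K_P)/(λₙ K_{K_P}), and |δ_{K_I}| < K_I/K_{K_I}. Then, writing ᾱ = p^(α)(θ_α+δ_α), K̄_P = p^(K_P)(θ_{K_P}+δ_{K_P}), K̄_I = p^(K_I)(θ_{K_I}+δ_{K_I}),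 the perturbed update matrix M̄ = [[K̄_P L + ᾱ Iₙ, −K̄_I L],[K̄_I L, 0_{n×n}]] has zero as a simple eigenvalue and all other eigenvalues with positive real part, so the perturbed PI-ACE protocol reaches agreement; this holds for all α, K_P, K_I > 0 and independently of the codeword values θ_α, θ_{K_P}, θ_{K_I}. -/
open Matrix BigOperators

open Polynomial in
theorem aux_det_diagBlocks {R ι : Type*} [CommRing R] [Fintype ι] [DecidableEq ι]
    (a b c d : ι → R) :
    (Matrix.fromBlocks (diagonal a) (diagonal b) (diagonal c) (diagonal d)).det
      = ∏ i, (a i * d i - b i * c i) := by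
  let e : ι ⊕ ι ≃ Fin 2 × ι :=
    (Equiv.boolProdEquivSum ι).symm.trans (finTwoEquiv.symm.prodCongr (Equiv.refl ι))
  have h : Matrix.fromBlocks (diagonal a) (diagonal b) (diagonal c) (diagonal d)
      = (Matrix.blockDiagonal (fun i => !![a i, b i; c i, d i])).submatrix e e := by
    ext i j
    rcases i with i | i <;> rcases j with j | j <;>
      simp [e, Matrix.blockDiagonal_apply, Matrix.diagonal_apply, finTwoEquiv]
  rw [h, Matrix.det_submatrix_equiv_self, Matrix.det_blockDiagonal]
  simp [Matrix.det_fin_two]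

open Polynomial in
theorem aux_charpoly {n : ℕ} (L : Matrix (Fin n) (Fin n) ℝ) (hL : L.IsHermitian) (a p k : ℝ) :
    (Matrix.fromBlocks (p • L + a • (1 : Matrix (Fin n) (Fin n) ℝ)) (-(k • L)) (k • L)
      (0 : Matrix (Fin n) (Fin n) ℝ)).charpoly
    = ∏ i, (X ^ 2 - C (p * hL.eigenvalues i + a) * X + C ((k * hL.eigenvalues i) ^ 2)) := by
  set D : Matrix (Fin n) (Fin n) ℝ := diagonal hL.eigenvalues with hD
  set U : Matrix (Fin n) (Fin n) ℝ := hL.eigenvectorUnitary.1 with hU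
  have hLU : L = U * D * star U := by
    have := hL.spectral_theorem
    rw [Unitary.conjStarAlgAut_apply] at this
    exact this
  have hUU : star U * U = 1 := Unitary.coe_star_mul_self hL.eigenvectorUnitary
  have hUU' : U * star U = 1 := Unitary.coe_mul_star_self hL.eigenvectorUnitary
  have hfac : Matrix.fromBlocks (p • L + a • (1 : Matrix (Fin n) (Fin n) ℝ)) (-(k • L)) (k • L)
      (0 : Matrix (Fin n) (Fin n) ℝ)
      = Matrix.fromBlocks U 0 0 U * (Matrix.fromBlocks (p • D + a • 1) (-(k • D)) (k • D) 0
        * Matrix.fromBlocks (star U) 0 0 (star U)) := by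
    simp only [Matrix.fromBlocks_multiply]
    congr 1 <;> simp [hLU, Matrix.mul_add, Matrix.add_mul, Matrix.mul_assoc, hUU']
  rw [hfac, Matrix.charpoly_mul_comm, Matrix.mul_assoc]
  have h1 : Matrix.fromBlocks (star U) 0 0 (star U) * Matrix.fromBlocks U 0 0 U = 1 := by
    simp [Matrix.fromBlocks_multiply, hUU]
  rw [h1, Matrix.mul_one, Matrix.charpoly]
  have h2 : Matrix.charmatrix (Matrix.fromBlocks (p • D + a • 1) (-(k • D)) (k • D) 0)
      = Matrix.fromBlocks (diagonal fun i => X - C (p * hL.eigenvalues i + a))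
          (diagonal fun i => C (k * hL.eigenvalues i))
          (diagonal fun i => - C (k * hL.eigenvalues i)) (diagonal fun _ => X) := by
    rw [Matrix.charmatrix_fromBlocks]
    congr 1 <;> ext1 i j <;> by_cases hij : i = j <;>
      simp [hD, hij, Matrix.charmatrix_apply, Matrix.diagonal_apply, Matrix.one_apply]
  rw [h2, aux_det_diagBlocks]
  refine Finset.prod_congr rfl fun i _ => ?_
  simp only [C_add, C_mul, C_pow]
  ring

theorem aux_lip (f : ℝ → ℝ) (K θ δ : ℝ) (hf : Differentiable ℝ f)
    (hK : ∀ η : ℝ, |deriv f η| ≤ K) : f θ - K * |δ| ≤ f (θ + δ) := by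
  have := Convex.norm_image_sub_le_of_norm_deriv_le (f := f) (C := K) (s := Set.univ)
    (x := θ) (y := θ + δ) (fun x _ => hf x) (fun x _ => hK x) convex_univ trivial trivial
  simp only [Real.norm_eq_abs, add_sub_cancel_left] at this
  linarith [neg_abs_le (f (θ + δ) - f θ)]

theorem aux_quad (b c : ℝ) (hb : 0 < b) (hc : 0 ≤ c) (μ : ℂ) (hμ : μ ≠ 0)
    (h : μ ^ 2 - (b : ℂ) * μ + (c : ℂ) = 0) : 0 < μ.re := by
  have hre := congrArg Complex.re h
  have him := congrArg Complex.im h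
  simp [pow_two] at hre him
  by_cases hy : μ.im = 0
  · have hx : μ.re ≠ 0 := fun hx => hμ (Complex.ext hx hy)
    have : 0 < μ.re * μ.re := mul_self_pos.2 hx
    rw [hy] at hre
    by_contra hn
    nlinarith
  · have : μ.im * (2 * μ.re - b) = 0 := by linarith
    rcases mul_eq_zero.1 this with h | h
    · exact absurd h hy
    · linarith

open Polynomial in
theorem aux_mult (b c l : ℝ) (hb : 0 < b) (hcl : c = 0 ↔ l = 0) :
    (X ^ 2 - C b * X + C c : ℝ[X]).roots.count 0 = (X - C l : ℝ[X]).roots.count 0 := by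
  by_cases hl : l = 0
  · rw [hcl.2 hl, hl]
    have : (X ^ 2 - C b * X + C 0 : ℝ[X]) = (X - C 0) * (X - C b) := by
      simp only [C_0]; ring
    rw [this, roots_mul (mul_ne_zero (X_sub_C_ne_zero _) (X_sub_C_ne_zero _)),
      roots_X_sub_C, roots_X_sub_C]
    simp [hb.ne]
  · have hc : c ≠ 0 := fun h => hl (hcl.1 h)
    rw [count_roots, count_roots, rootMultiplicity_eq_zero, rootMultiplicity_eq_zero]
    · simpa using hl
    · simpa using hc

open Polynomial in
theorem aux_ne (b c : ℝ) : (X ^ 2 - C b * X + C c : ℝ[X]) ≠ 0 := by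
  intro h
  have := congrArg (fun q => q.coeff 2) h
  simp [coeff_X, coeff_C] at this

/-- **Theorem 4 of the paper.** For the unweighted Laplacian `L` of a
connected graph with largest eigenvalue `λₙ`, and concave, differentiable, Lipschitz
decoding functions for the three PI-ACE parameters with nominal values
`α, K_P, K_I > 0`, any injection attacks `δ_α, δ_{K_P}, δ_{K_I}` satisfying
`|δ_α| < α/K_α`, `|δ_{K_P}| < (α - K_α|δ_α| + λₙ K_P)/(λₙ K_{K_P})`, and
`|δ_{K_I}| < K_I/K_{K_I}` leave the perturbed update matrix `M̄` with a simple zero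
eigenvalue and all other eigenvalues in the open right half plane, independently of
the codewords. -/
theorem piace_perturbed_all_parameters_stability
    {n m : ℕ} (Em : Matrix (Fin n) (Fin m) ℝ)
    (hinc : ∀ k : Fin m, ∃ i j : Fin n, i ≠ j ∧
      ∀ l, Em l k = (if l = i then (1 : ℝ) else 0) - (if l = j then 1 else 0))
    (L : Matrix (Fin n) (Fin n) ℝ)
    (hL : L = Em * Em.transpose)
    -- connectivity: simple zero eigenvalue with eigenspace `span{1ₙ}`
    (hker : ∀ x : Fin n → ℝ, L.mulVec x = 0 ↔ ∃ c : ℝ, x = fun _ => c)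
    (hsimple : (Matrix.charpoly L).rootMultiplicity 0 = 1)
    -- largest eigenvalue `λₙ` of `L`
    (lamN : ℝ)
    (hlamN : IsGreatest {lam : ℝ | Module.End.HasEigenvalue (Matrix.toLin' L) lam} lamN)
    -- decoding functions for the three parameters
    (pα pKP pKI : ℝ → ℝ) (Kα KKP KKI : ℝ)
    (hKα : 0 < Kα) (hKKP : 0 < KKP) (hKKI : 0 < KKI)
    (hpα_diff : Differentiable ℝ pα) (hpα_conc : ConcaveOn ℝ Set.univ pα)
    (hpα_lip : ∀ η : ℝ, |deriv pα η| ≤ Kα)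
    (hpKP_diff : Differentiable ℝ pKP) (hpKP_conc : ConcaveOn ℝ Set.univ pKP)
    (hpKP_lip : ∀ η : ℝ, |deriv pKP η| ≤ KKP)
    (hpKI_diff : Differentiable ℝ pKI) (hpKI_conc : ConcaveOn ℝ Set.univ pKI)
    (hpKI_lip : ∀ η : ℝ, |deriv pKI η| ≤ KKI)
    -- nominal parameter values
    (θα θKP θKI : ℝ) (α KP KI : ℝ)
    (hα : 0 < α) (hKP : 0 < KP) (hKI : 0 < KI)
    (hθα : pα θα = α) (hθKP : pKP θKP = KP) (hθKI : pKI θKI = KI)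
    -- attack bounds
    (δα δKP δKI : ℝ)
    (hδα : |δα| < α / Kα)
    (hδKP : |δKP| < (α - Kα * |δα| + lamN * KP) / (lamN * KKP))
    (hδKI : |δKI| < KI / KKI)
    (Mbar : Matrix (Fin n ⊕ Fin n) (Fin n ⊕ Fin n) ℝ)
    (hMbar : Mbar = Matrix.fromBlocks
      (pKP (θKP + δKP) • L + pα (θα + δα) • (1 : Matrix (Fin n) (Fin n) ℝ))
      (-(pKI (θKI + δKI) • L)) (pKI (θKI + δKI) • L)
      (0 : Matrix (Fin n) (Fin n) ℝ)) :
    (Matrix.charpoly (Mbar.map (algebraMap ℝ ℂ))).rootMultiplicity 0 = 1 ∧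
      ∀ μ : ℂ, Module.End.HasEigenvalue
          (Matrix.toLin' (Mbar.map (algebraMap ℝ ℂ))) μ → μ ≠ 0 → 0 < μ.re := by
  have hH : L.IsHermitian := by
    rw [hL]; simpa using Matrix.isHermitian_mul_conjTranspose_self Em
  have hpsd : L.PosSemidef := by
    rw [hL]; simpa using Matrix.posSemidef_self_mul_conjTranspose Em
  set a := pα (θα + δα) with ha
  set p := pKP (θKP + δKP) with hp
  set k := pKI (θKI + δKI) with hk
  have la := aux_lip pα Kα θα δα hpα_diff hpα_lip
  have lp := aux_lip pKP KKP θKP δKP hpKP_diff hpKP_lip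
  have lk := aux_lip pKI KKI θKI δKI hpKI_diff hpKI_lip
  rw [hθα, ← ha] at la
  rw [hθKP, ← hp] at lp
  rw [hθKI, ← hk] at lk
  rw [lt_div_iff₀ hKα] at hδα
  rw [lt_div_iff₀ hKKI] at hδKI
  have hapos : 0 < a := by nlinarith
  have hkpos : 0 < k := by nlinarith
  have hev : ∀ i, Module.End.HasEigenvalue (Matrix.toLin' L) (hH.eigenvalues i) := by
    intro i
    rw [Module.End.hasEigenvalue_iff_mem_spectrum, Matrix.spectrum_toLin']
    exact hH.eigenvalues_mem_spectrum_real i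
  have hnn : ∀ i, 0 ≤ hH.eigenvalues i := fun i => hpsd.eigenvalues_nonneg i
  have hle : ∀ i, hH.eigenvalues i ≤ lamN := fun i => hlamN.2 (hev i)
  have hlam0 : 0 ≤ lamN := by
    have h1 : lamN ∈ spectrum ℝ L := by
      rw [← Matrix.spectrum_toLin', ← Module.End.hasEigenvalue_iff_mem_spectrum]
      exact hlamN.1
    rw [hH.spectrum_real_eq_range_eigenvalues] at h1
    obtain ⟨i, hi⟩ := h1
    rw [← hi]; exact hnn i
  have hlam : 0 < lamN := by
    rcases hlam0.eq_or_lt with h | h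
    · rw [← h] at hδKP
      simp at hδKP
      exact absurd hδKP (not_lt.2 (abs_nonneg _))
    · exact h
  rw [lt_div_iff₀ (by positivity)] at hδKP
  have hN : 0 < p * lamN + a := by nlinarith
  have hb : ∀ i, 0 < p * hH.eigenvalues i + a := by
    intro i
    rcases le_or_gt 0 p with h | h
    · have := mul_nonneg h (hnn i); linarith
    · nlinarith [hle i]
  have hcp := aux_charpoly L hH a p k
  rw [← hMbar] at hcp
  have hmapc : (Mbar.map (algebraMap ℝ ℂ)).charpoly
      = Mbar.charpoly.map (algebraMap ℝ ℂ) := Matrix.charpoly_map _ _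
  constructor
  · rw [hmapc]
    have := Polynomial.eq_rootMultiplicity_map (p := Mbar.charpoly)
      (algebraMap ℝ ℂ).injective 0
    rw [map_zero] at this
    rw [← this, ← hsimple, ← Polynomial.count_roots, ← Polynomial.count_roots, hcp,
      hH.charpoly_eq, Polynomial.roots_prod _ _ (Finset.prod_ne_zero_iff.2 fun i _ => aux_ne _ _),
      Polynomial.roots_prod _ _
        (Finset.prod_ne_zero_iff.2 fun i _ => Polynomial.X_sub_C_ne_zero _),
      Multiset.count_bind, Multiset.count_bind]
    congr 1
    refine Multiset.map_congr rfl fun i _ => ?_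
    refine aux_mult _ _ _ (hb i) ?_
    simp [hkpos.ne']
  · intro μ hμ h0
    rw [Module.End.hasEigenvalue_iff_isRoot_charpoly, Matrix.charpoly_toLin', hmapc, hcp,
      Polynomial.IsRoot, Polynomial.eval_map, Polynomial.eval₂_finsetProd,
      Finset.prod_eq_zero_iff] at hμ
    obtain ⟨i, -, hi⟩ := hμ
    refine aux_quad _ _ (hb i) (sq_nonneg (k * hH.eigenvalues i)) μ h0 ?_
    simpa using hi
end

section
/- Let L = E W Eᵀ be the Laplacian of a connected weighted graph G with positive edge weights, maximum weighted degree Ψ_G, a fixed edge (u,v) with effective resistance R_uv(G), and a decoding function p_uv that is concave, differentiable, and Lipschitz with constant K_uv > 0. Fix a step size ε with 0 < ε < 1/Ψ_G. If a single-edge attack δ on (u,v) satisfies |δ| < K_uv⁻¹ · min{ R_uv(G)⁻¹, ε⁻¹ − Ψ_G }, then the perturbed discrete-time protocol x(t+1) = (Iₙ − ε L_Δ) x(t), with L_Δ = L + (p_uv(θ_uv+δ) − p_uv(θ_uv)) b bᵀ and b = e_u − e_v, reaches robust agreement (x(t) converges to a point of span{1ₙ}), independently of the codeword θ_uv. -/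
open Matrix BigOperators Filter Topology

theorem aux_conv {n : ℕ} (M : Matrix (Fin n) (Fin n) ℝ) (hM : M.IsHermitian)
    (h : ∀ (μ : ℝ) (x : Fin n → ℝ), x ≠ 0 → M *ᵥ x = μ • x → -1 < μ ∧ μ ≤ 1)
    (x0 : Fin n → ℝ) :
    ∃ z, Tendsto (fun t : ℕ => (M ^ t) *ᵥ x0) atTop (𝓝 z) ∧ M *ᵥ z = z := by
  have hlam : ∀ i, ∃ l, Tendsto (fun t : ℕ => hM.eigenvalues i ^ t) atTop (𝓝 l) := by
    intro i
    have h1 := h (hM.eigenvalues i) (hM.eigenvectorBasis i).ofLp (by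
      intro h0
      have := (hM.eigenvectorBasis.orthonormal.ne_zero i)
      apply this
      ext j
      simpa using congrFun h0 j) (hM.mulVec_eigenvectorBasis i)
    rcases h1.2.eq_or_lt with h2 | h2
    · exact ⟨1, by simp [h2]⟩
    · exact ⟨0, tendsto_pow_atTop_nhds_zero_of_abs_lt_one (abs_lt.2 ⟨h1.1, h2⟩)⟩
  choose l hl using hlam
  have hpow : ∀ (t : ℕ) i, (M ^ t) *ᵥ (hM.eigenvectorBasis i).ofLp
      = hM.eigenvalues i ^ t • (hM.eigenvectorBasis i).ofLp := by
    intro t i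
    induction t with
    | zero => simp
    | succ t ih =>
      rw [pow_succ, ← Matrix.mulVec_mulVec, hM.mulVec_eigenvectorBasis, Matrix.mulVec_smul, ih,
        smul_smul, pow_succ, mul_comm]
  have hx : x0 = ∑ i, hM.eigenvectorBasis.repr (WithLp.toLp 2 x0) i •
      (hM.eigenvectorBasis i).ofLp := by
    have := congrArg WithLp.ofLp (hM.eigenvectorBasis.sum_repr (WithLp.toLp 2 x0))
    simpa using this.symm
  have hlim : ∃ z, Tendsto (fun t : ℕ => (M ^ t) *ᵥ x0) atTop (𝓝 z) := by
    refine ⟨∑ i, hM.eigenvectorBasis.repr (WithLp.toLp 2 x0) i •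
      (l i • (hM.eigenvectorBasis i).ofLp), ?_⟩
    have : (fun t : ℕ => (M ^ t) *ᵥ x0) = fun t : ℕ =>
        ∑ i, hM.eigenvectorBasis.repr (WithLp.toLp 2 x0) i •
      (hM.eigenvalues i ^ t • (hM.eigenvectorBasis i).ofLp) := by
      funext t
      conv_lhs => rw [hx]
      rw [Matrix.mulVec_sum]
      refine Finset.sum_congr rfl fun i _ => ?_
      rw [Matrix.mulVec_smul, hpow]
    rw [this]
    exact tendsto_finset_sum _ fun i _ => ((hl i).smul_const _).const_smul _
  obtain ⟨z, hz⟩ := hlim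
  refine ⟨z, hz, ?_⟩
  have h1 := (tendsto_add_atTop_iff_nat 1).2 hz
  have hc : Continuous fun x : Fin n → ℝ => M *ᵥ x := Continuous.matrix_mulVec continuous_const continuous_id
  have h2 := (hc.tendsto z).comp hz
  refine tendsto_nhds_unique h2 (h1.congr fun t => ?_)
  simp only [Function.comp]
  rw [Matrix.mulVec_mulVec, pow_succ']

theorem aux_quad_s12 {n m : ℕ} (Em : Matrix (Fin n) (Fin m) ℝ) (w : Fin m → ℝ) (x : Fin n → ℝ) :
    x ⬝ᵥ (Em * Matrix.diagonal w * Em.transpose) *ᵥ x = ∑ k, w k * (∑ l, Em l k * x l) ^ 2 := by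
  rw [← Matrix.mulVec_mulVec, ← Matrix.mulVec_mulVec, Matrix.dotProduct_mulVec]
  simp only [dotProduct, Matrix.mulVec_diagonal]
  refine Finset.sum_congr rfl fun k _ => ?_
  have h1 : (x ᵥ* Em) k = ∑ l, Em l k * x l := by
    simp [Matrix.vecMul, dotProduct, mul_comm]
  have h2 : (Emᵀ *ᵥ x) k = ∑ l, Em l k * x l := by
    simp [Matrix.mulVec, dotProduct]
  rw [h1, h2]; ring

theorem aux_edge {n : ℕ} (i j : Fin n) (hij : i ≠ j) (e x : Fin n → ℝ)
    (he : ∀ l, e l = (if l = i then (1 : ℝ) else 0) - (if l = j then 1 else 0)) :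
    (∑ l, e l * x l) ^ 2 ≤ 2 * ∑ l, e l ^ 2 * x l ^ 2 := by
  have h1 : ∑ l, e l * x l = x i - x j := by
    simp [he, sub_mul, Finset.sum_sub_distrib]
  have h2 : ∑ l, e l ^ 2 * x l ^ 2 = x i ^ 2 + x j ^ 2 := by
    have : ∀ l, e l ^ 2 * x l ^ 2 = (if l = i then x l ^ 2 else 0) + (if l = j then x l ^ 2 else 0) := by
      intro l
      rw [he]
      by_cases h : l = i
      · subst h; simp [hij]
      · simp [h]
    simp [this, Finset.sum_add_distrib]
  rw [h1, h2]
  nlinarith [sq_nonneg (x i + x j)]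

/-- **Corollary 2 of the paper.** With step size `0 < ε < 1/Ψ_G`,
a single-edge codeword attack `δ` on `(u,v)` through a concave, differentiable,
`K_uv`-Lipschitz decoding function satisfying
`|δ| < K_uv⁻¹ · min{R_uv(G)⁻¹, ε⁻¹ - Ψ_G}` lets the perturbed discrete-time protocol
`x(t+1) = (I - ε L_Δ) x(t)` reach robust agreement (convergence to a point of
`span{1ₙ}`), independently of the codeword `θ_uv`. -/
theorem sbdc_discrete_time_simplified_robust_agreement
    {n m : ℕ} (hn : 0 < n) (Em : Matrix (Fin n) (Fin m) ℝ) (w : Fin m → ℝ)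
    (hw : ∀ k, 0 < w k)
    (hinc : ∀ k : Fin m, ∃ i j : Fin n, i ≠ j ∧
      ∀ l, Em l k = (if l = i then (1 : ℝ) else 0) - (if l = j then 1 else 0))
    (L : Matrix (Fin n) (Fin n) ℝ)
    (hL : L = Em * Matrix.diagonal w * Em.transpose)
    (hker : ∀ x : Fin n → ℝ, L.mulVec x = 0 ↔ ∃ c : ℝ, x = fun _ => c)
    (u v : Fin n) (huv : u ≠ v)
    (b : Fin n → ℝ)
    (hb : b = fun i => (if i = u then (1 : ℝ) else 0) - (if i = v then 1 else 0))
    -- decoding function of the edge `(u,v)`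
    (p : ℝ → ℝ) (K : ℝ) (hK : 0 < K)
    (hp_diff : Differentiable ℝ p)
    (hp_conc : ConcaveOn ℝ Set.univ p)
    (hp_lip : ∀ η : ℝ, |deriv p η| ≤ K)
    (θ : ℝ)
    (hedge : ∃ k : Fin m, ((∀ l, Em l k = b l) ∨ (∀ l, Em l k = -(b l))) ∧ w k = p θ)
    -- effective resistance between `u` and `v`
    (y : Fin n → ℝ) (hy : L.mulVec y = b)
    (R : ℝ) (hR : R = b ⬝ᵥ y)
    -- maximum weighted degree `Ψ_G`
    (Ψ : ℝ) (hΨ : IsGreatest (Set.range fun i : Fin n => L i i) Ψ)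
    (ε : ℝ) (hε : 0 < ε) (hεΨ : ε < 1 / Ψ)
    (δ : ℝ) (hδ : |δ| < K⁻¹ * min R⁻¹ (ε⁻¹ - Ψ))
    (LΔ : Matrix (Fin n) (Fin n) ℝ)
    (hLΔ : LΔ = L + (p (θ + δ) - p θ) • Matrix.vecMulVec b b) :
    ∀ x0 : Fin n → ℝ, ∃ c : ℝ,
      Tendsto
        (fun t : ℕ => (((1 : Matrix (Fin n) (Fin n) ℝ) - ε • LΔ) ^ t).mulVec x0)
        atTop (nhds fun _ => c) := by
  obtain ⟨hi, hlo, hup⟩ : L.IsHermitian ∧ (∀ x, 0 ≤ x ⬝ᵥ L *ᵥ x) ∧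
      ∀ x, x ⬝ᵥ L *ᵥ x ≤ 2 * Ψ * (x ⬝ᵥ x) := by
    refine ⟨?_, ?_, ?_⟩
    · rw [hL]
      ext a c
      simp [Matrix.mul_apply, Matrix.diagonal_apply, mul_comm, mul_left_comm]
    · intro x
      rw [hL, aux_quad_s12]
      exact Finset.sum_nonneg fun k _ => mul_nonneg (hw k).le (sq_nonneg _)
    · intro x
      have hd : ∀ l, L l l = ∑ k, w k * Em l k ^ 2 := by
        intro l
        rw [hL, Matrix.mul_apply]
        simp only [Matrix.mul_diagonal, Matrix.transpose_apply]
        exact Finset.sum_congr rfl fun k _ => by ring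
      calc x ⬝ᵥ L *ᵥ x = ∑ k, w k * (∑ l, Em l k * x l) ^ 2 := by rw [hL, aux_quad_s12]
        _ ≤ ∑ k, w k * (2 * ∑ l, Em l k ^ 2 * x l ^ 2) := by
          refine Finset.sum_le_sum fun k _ => ?_
          obtain ⟨i, j, hij, he⟩ := hinc k
          exact mul_le_mul_of_nonneg_left (aux_edge i j hij (fun l => Em l k) x he) (hw k).le
        _ = ∑ l, 2 * (L l l * x l ^ 2) := by
          simp only [hd, Finset.mul_sum, Finset.sum_mul]
          rw [Finset.sum_comm]
          exact Finset.sum_congr rfl fun k _ => Finset.sum_congr rfl fun l _ => by ring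
        _ ≤ ∑ l, 2 * (Ψ * x l ^ 2) := by
          refine Finset.sum_le_sum fun l _ => ?_
          have : L l l ≤ Ψ := hΨ.2 ⟨l, rfl⟩
          nlinarith [mul_le_mul_of_nonneg_right this (sq_nonneg (x l))]
        _ = 2 * Ψ * (x ⬝ᵥ x) := by
          simp only [dotProduct, Finset.mul_sum]
          exact Finset.sum_congr rfl fun l _ => by ring
  have hsym : ∀ x z, x ⬝ᵥ L *ᵥ z = z ⬝ᵥ L *ᵥ x := by
    intro x z
    have ht : Lᵀ = L := by simpa [Matrix.IsHermitian] using hi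
    rw [Matrix.dotProduct_mulVec, ← Matrix.mulVec_transpose, ht, dotProduct_comm]
  -- bound on the weight deviation
  set d := p (θ + δ) - p θ with hd
  have hdK : |d| ≤ K * |δ| := by
    have := Convex.norm_image_sub_le_of_norm_deriv_le (f := p) (s := Set.univ) (C := K)
      (x := θ) (y := θ + δ) (fun x _ => hp_diff x) (fun x _ => by simpa using hp_lip x)
      convex_univ trivial trivial
    simpa using this
  have hdm : |d| < min R⁻¹ (ε⁻¹ - Ψ) := by
    refine hdK.trans_lt ?_
    have := mul_lt_mul_of_pos_left hδ hK
    rwa [mul_inv_cancel_left₀ hK.ne'] at this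
  obtain ⟨hd1, hd2⟩ := lt_min_iff.1 hdm
  have hRpos : 0 < R := inv_pos.1 ((abs_nonneg d).trans_lt hd1)
  have hdR : |d| * R < 1 := by
    have := mul_lt_mul_of_pos_right hd1 hRpos
    rwa [inv_mul_cancel₀ hRpos.ne'] at this
  have hCS : ∀ x, (b ⬝ᵥ x) ^ 2 ≤ R * (x ⬝ᵥ L *ᵥ x) := by
    intro x
    have h0 := hlo (R • x - (b ⬝ᵥ x) • y)
    simp only [Matrix.mulVec_sub, Matrix.mulVec_smul, dotProduct_sub, sub_dotProduct,
      dotProduct_smul, smul_dotProduct, smul_eq_mul] at h0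
    rw [hsym y x, hy, dotProduct_comm x b, dotProduct_comm y b, ← hR] at h0
    have h3 : 0 ≤ R * (R * (x ⬝ᵥ L *ᵥ x) - (b ⬝ᵥ x) ^ 2) := by linarith
    have := nonneg_of_mul_nonneg_right h3 hRpos
    linarith
  have hbx : ∀ x, (b ⬝ᵥ x) ^ 2 ≤ 2 * (x ⬝ᵥ x) := by
    intro x
    have h1 := aux_edge u v huv b x (fun l => by rw [hb])
    refine h1.trans ?_
    refine mul_le_mul_of_nonneg_left (Finset.sum_le_sum fun l _ => ?_) (by norm_num)
    have : b l ^ 2 ≤ 1 := by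
      rw [hb]; dsimp only
      split_ifs <;> norm_num
    nlinarith [sq_nonneg (x l)]
  have hmv : ∀ x, LΔ *ᵥ x = L *ᵥ x + (d * (b ⬝ᵥ x)) • b := by
    intro x
    rw [hLΔ, Matrix.add_mulVec, Matrix.smul_mulVec, Matrix.vecMulVec_mulVec]
    ext i
    simp
    ring
  have hq : ∀ x, x ⬝ᵥ LΔ *ᵥ x = x ⬝ᵥ L *ᵥ x + d * (b ⬝ᵥ x) ^ 2 := by
    intro x
    rw [hmv, dotProduct_add, dotProduct_smul, dotProduct_comm x b, smul_eq_mul]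
    ring
  have hqlo : ∀ x, (1 - |d| * R) * (x ⬝ᵥ L *ᵥ x) ≤ x ⬝ᵥ LΔ *ᵥ x := by
    intro x
    rw [hq]
    have h1 := mul_le_mul_of_nonneg_left (hCS x) (abs_nonneg d)
    have h2 := mul_le_mul_of_nonneg_right (neg_abs_le d) (sq_nonneg (b ⬝ᵥ x))
    linarith
  have hqup : ∀ x, x ⬝ᵥ LΔ *ᵥ x ≤ 2 * (Ψ + |d|) * (x ⬝ᵥ x) := by
    intro x
    rw [hq]
    have h1 := mul_le_mul_of_nonneg_left (hbx x) (abs_nonneg d)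
    have h2 := mul_le_mul_of_nonneg_right (le_abs_self d) (sq_nonneg (b ⬝ᵥ x))
    have h3 := hup x
    linarith
  have hMv : ∀ x, (1 - ε • LΔ) *ᵥ x = x - ε • (LΔ *ᵥ x) := by
    intro x
    rw [Matrix.sub_mulVec, Matrix.one_mulVec, Matrix.smul_mulVec]
  have hMH : (1 - ε • LΔ).IsHermitian := by
    ext i j
    have := congrFun (congrFun hi i) j
    simp [Matrix.conjTranspose_apply] at this
    simp [hLΔ, this, Matrix.vecMulVec_apply, Matrix.one_apply, eq_comm, mul_comm]
  intro x0
  obtain ⟨z, hz, hfix⟩ := aux_conv (1 - ε • LΔ) hMH (by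
    intro μ x hx hμ
    have hpos : 0 < x ⬝ᵥ x := by
      have h0 : 0 ≤ x ⬝ᵥ x := Finset.sum_nonneg fun i _ => mul_self_nonneg _
      exact lt_of_le_of_ne h0 fun h => hx (dotProduct_self_eq_zero.1 h.symm)
    rw [hMv] at hμ
    have h1 := congrArg (fun z => x ⬝ᵥ z) hμ
    simp only [dotProduct_sub, dotProduct_smul, smul_eq_mul] at h1
    have hl : 0 ≤ x ⬝ᵥ LΔ *ᵥ x :=
      (mul_nonneg (by linarith) (hlo x)).trans (hqlo x)
    have hu := mul_le_mul_of_nonneg_left (hqup x) hε.le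
    have h2 : ε * (Ψ + |d|) < 1 := by
      have : Ψ + |d| < ε⁻¹ := by linarith
      have := mul_lt_mul_of_pos_left this hε
      rwa [mul_inv_cancel₀ hε.ne'] at this
    have h3 := mul_lt_mul_of_pos_right h2 hpos
    have h4 := mul_nonneg hε.le hl
    constructor
    · have : (-1) * (x ⬝ᵥ x) < μ * (x ⬝ᵥ x) := by linarith
      exact lt_of_mul_lt_mul_right this hpos.le
    · have : μ * (x ⬝ᵥ x) ≤ 1 * (x ⬝ᵥ x) := by linarith
      exact le_of_mul_le_mul_right this hpos) x0
  have hz0 : LΔ *ᵥ z = 0 := by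
    rw [hMv, sub_eq_self] at hfix
    exact (smul_eq_zero.1 hfix).resolve_left hε.ne'
  have hqz := hqlo z
  rw [hz0, dotProduct_zero] at hqz
  have hq0 : z ⬝ᵥ L *ᵥ z = 0 := by
    have h1 := hlo z
    have h2 : 0 < 1 - |d| * R := by linarith
    by_contra hne
    have := mul_pos h2 (lt_of_le_of_ne h1 (Ne.symm hne))
    linarith
  have hbz : b ⬝ᵥ z = 0 := by
    have := hCS z
    rw [hq0, mul_zero] at this
    exact pow_eq_zero_iff (two_ne_zero) |>.1 (le_antisymm this (sq_nonneg _))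
  have hLz : L *ᵥ z = 0 := by
    have := hmv z
    rw [hz0, hbz, mul_zero, zero_smul, add_zero] at this
    exact this.symm
  obtain ⟨c, hc⟩ := (hker z).1 hLz
  exact ⟨c, hc ▸ hz⟩
end

section
/- Let L ∈ ℝ^{n×n} be symmetric positive semidefinite with kernel exactly span{1ₙ}, and let ε > 0 satisfy ε · λ_max(L) < 2. Then the matrix A = Iₙ − ε L satisfies Aᵗ → (1/n) 1ₙ 1ₙᵀ as t → ∞; consequently, for every x₀ ∈ ℝⁿ, the discrete-time consensus iteration x(t+1) = A x(t) converges to the average consensus point (1ₙᵀ x₀ / n) 1ₙ. -/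
open Matrix BigOperators Filter Topology

/-- If `L` is symmetric PSD with kernel exactly `span{1ₙ}` and
`ε λ_max(L) < 2`, then `A = I - ε L` satisfies `Aᵗ → (1/n) 1ₙ 1ₙᵀ`, so the
discrete-time consensus iteration `x(t+1) = A x(t)` converges to the average
consensus point `(1ₙᵀ x₀ / n) 1ₙ` for every initial state `x₀`. -/
theorem discrete_consensus_power_tendsto_average
    {n : ℕ} (hn : 0 < n) (L : Matrix (Fin n) (Fin n) ℝ)
    (hPSD : L.PosSemidef)
    (hker : ∀ x : Fin n → ℝ, L.mulVec x = 0 ↔ ∃ c : ℝ, x = fun _ => c)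
    (lmax : ℝ)
    (hlmax : IsGreatest {lam : ℝ | Module.End.HasEigenvalue (Matrix.toLin' L) lam} lmax)
    (ε : ℝ) (hε : 0 < ε) (hεl : ε * lmax < 2) :
    Tendsto (fun t : ℕ => ((1 : Matrix (Fin n) (Fin n) ℝ) - ε • L) ^ t) atTop
        (nhds (Matrix.of fun _ _ => (n : ℝ)⁻¹)) ∧
      ∀ x₀ : Fin n → ℝ,
        Tendsto
          (fun t : ℕ => (((1 : Matrix (Fin n) (Fin n) ℝ) - ε • L) ^ t).mulVec x₀)
          atTop (nhds fun _ => (∑ i, x₀ i) / n) := by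
  have hvec : ∀ x₀ : Fin n → ℝ,
        Tendsto
          (fun t : ℕ => (((1 : Matrix (Fin n) (Fin n) ℝ) - ε • L) ^ t).mulVec x₀)
          atTop (nhds fun _ => (∑ i, x₀ i) / n) := by
    have hn0 : (n : ℝ) ≠ 0 := by positivity
    have hH := hPSD.isHermitian
    have hb : ∀ j, Tendsto
          (fun t : ℕ => (((1 : Matrix (Fin n) (Fin n) ℝ) - ε • L) ^ t).mulVec
            (hH.eigenvectorBasis j).ofLp)
          atTop (nhds fun _ => (∑ i, (hH.eigenvectorBasis j).ofLp i) / n) := by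
      intro j
      have hv := hH.mulVec_eigenvectorBasis j
      have hvne : (hH.eigenvectorBasis j).ofLp ≠ 0 := by
        intro h
        exact hH.eigenvectorBasis.orthonormal.ne_zero j (by ext i; simpa using congrFun h i)
      have hnn := hPSD.eigenvalues_nonneg j
      generalize (hH.eigenvectorBasis j).ofLp = v at hv hvne ⊢
      generalize hH.eigenvalues j = lam at hv hnn ⊢
      have hle : lam ≤ lmax := hlmax.2 (Module.End.hasEigenvalue_of_hasEigenvector (x := v)
        (Module.End.hasEigenvector_iff.2 ⟨Module.End.mem_eigenspace_iff.2 (by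
          simpa using hv), hvne⟩))
      have hpow : ∀ t : ℕ, (((1 : Matrix (Fin n) (Fin n) ℝ) - ε • L) ^ t).mulVec v
          = (1 - ε * lam) ^ t • v := by
        intro t
        induction t with
        | zero => simp
        | succ k ih =>
          rw [pow_succ, ← Matrix.mulVec_mulVec, Matrix.sub_mulVec, Matrix.one_mulVec,
            Matrix.smul_mulVec, hv, Matrix.mulVec_sub, Matrix.mulVec_smul, Matrix.mulVec_smul, ih]
          ext i
          simp only [Pi.sub_apply, Pi.smul_apply, smul_eq_mul]
          ring
      simp only [hpow]
      by_cases h0 : lam = 0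
      · subst h0
        obtain ⟨c, rfl⟩ := (hker v).1 (by simpa using hv)
        have : (fun _ : Fin n => (∑ _i : Fin n, c) / (n : ℝ)) = fun _ => c := by
          ext i; simp; field_simp
        rw [this]
        simp
      · have h1 : L.mulVec (fun _ => (1 : ℝ)) = 0 := (hker _).2 ⟨1, rfl⟩
        have hs : ∑ i, v i = 0 := by
          have e1 : (fun _ => (1 : ℝ)) ⬝ᵥ L.mulVec v = 0 := by
            rw [Matrix.dotProduct_mulVec, ← Matrix.mulVec_transpose]
            have : Lᵀ = L := (show L.IsSymm by simpa using hH)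
            rw [this, h1, zero_dotProduct]
          rw [hv, dotProduct_smul] at e1
          simpa [dotProduct, h0] using e1
        have hpos : 0 < lam := lt_of_le_of_ne hnn (Ne.symm h0)
        have hr : Tendsto (fun t : ℕ => (1 - ε * lam) ^ t) atTop (nhds 0) := by
          apply tendsto_pow_atTop_nhds_zero_of_abs_lt_one
          have := mul_le_mul_of_nonneg_left hle hε.le
          have := mul_pos hε hpos
          rw [abs_lt]; constructor <;> linarith
        have := hr.smul_const v
        rw [hs, zero_div]
        rw [zero_smul] at this
        exact this
    intro x₀
    have hx : x₀ = ∑ j, (hH.eigenvectorBasis.repr (WithLp.toLp 2 x₀) j) •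
        (hH.eigenvectorBasis j).ofLp := by
      have := congrArg WithLp.ofLp (hH.eigenvectorBasis.sum_repr (WithLp.toLp 2 x₀))
      simpa using this.symm
    have hsum := tendsto_finsetSum Finset.univ (fun j _ => (hb j).const_smul
      (hH.eigenvectorBasis.repr (WithLp.toLp 2 x₀) j))
    convert hsum using 2 with t
    · conv_lhs => rw [hx]
      rw [Matrix.mulVec_sum]
      simp only [Matrix.mulVec_smul]
    · ext i
      conv_lhs => rw [hx]
      simp only [Finset.sum_apply, Pi.smul_apply, smul_eq_mul]
      rw [Finset.sum_comm, Finset.sum_div]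
      refine Finset.sum_congr rfl fun j _ => ?_
      rw [← Finset.mul_sum, mul_div_assoc]
  refine ⟨?_, hvec⟩
  refine tendsto_pi_nhds.2 fun i => tendsto_pi_nhds.2 fun j => ?_
  have := tendsto_pi_nhds.1 (hvec (Pi.single j 1)) i
  simpa using this
end
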